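/- Assume the instance is feasible on m machines and let q > 0. Then there exists a feasible m-machine solution whose energy is at most 3·(S* + P), where S* is the minimum cost of an m-machine skeleton and P = Σ_i p_i. Since S* is at most the minimum energy OPT of a feasible solution and P ≤ OPT, it follows that there is a feasible solution of energy at most 6·OPT. -/

import Mathlib

open scoped Classical

/-- A job with release time `r`, deadline `d`, and processing requirement `p`. -/
structure Job where
  r : ℕ
  d : ℕ
  p : ℕ

/-- A valid job: `p ≥ 1` and `r + p ≤ d`. -/
def Job.Valid (j : Job) : Prop := 1 ≤ j.p ∧ j.r + j.p ≤ j.d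

/-- Number of maximal runs of consecutive slots of `A` (counted by left endpoints). -/
noncomputable def runs (A : Finset ℕ) : ℕ :=
  (A.filter (fun t => ∀ s ∈ A, s + 1 ≠ t)).card

/-- `cost q A = |A| + q · c(A)` for wake-up cost `q`. -/
noncomputable def cost (q : ℝ) (A : Finset ℕ) : ℝ := (A.card : ℝ) + q * (runs A : ℝ)

/-- A feasible single-processor solution: active slots `A` and schedule `σ` assigning to
each slot at most one job, each job `i` scheduled in exactly `pᵢ` slots `t` with
`rᵢ ≤ t ≤ dᵢ − 1`, all within `A`. -/
def Feasible {n : ℕ} (jobs : Fin n → Job) (A : Finset ℕ) (σ : ℕ → Option (Fin n)) : Prop :=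
  (∀ t : ℕ, (σ t).isSome → t ∈ A) ∧
  (∀ (i : Fin n) (t : ℕ), σ t = some i → (jobs i).r ≤ t ∧ t + 1 ≤ (jobs i).d) ∧
  (∀ i : Fin n, (A.filter (fun t => σ t = some i)).card = (jobs i).p)

/-- A skeleton: for every job `i` there is an active slot `t ∈ B` with
`rᵢ − 1 ≤ t ≤ dᵢ`, i.e. an active slot overlapping the span `[rᵢ, dᵢ]`. -/
def Skeleton {n : ℕ} (jobs : Fin n → Job) (B : Finset ℕ) : Prop :=
  ∀ i : Fin n, ∃ t ∈ B, (jobs i).r ≤ t + 1 ∧ t ≤ (jobs i).d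

/-- A feasible `m`-machine solution: active slot sets `A k` and a schedule `σ` assigning
jobs to (machine, slot) pairs with `t ∈ A k`, each job `i` assigned exactly `pᵢ` pairs,
all with `rᵢ ≤ t ≤ dᵢ − 1`, no two jobs sharing a pair, and no job on two machines in the
same slot. -/
def MFeasible {n m : ℕ} (jobs : Fin n → Job) (A : Fin m → Finset ℕ)
    (σ : Fin m → ℕ → Option (Fin n)) : Prop :=
  (∀ (k : Fin m) (t : ℕ), (σ k t).isSome → t ∈ A k) ∧
  (∀ (k : Fin m) (t : ℕ) (i : Fin n), σ k t = some i →
    (jobs i).r ≤ t ∧ t + 1 ≤ (jobs i).d) ∧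
  (∀ (k k' : Fin m) (t : ℕ) (i : Fin n), σ k t = some i → σ k' t = some i → k = k') ∧
  (∀ i : Fin n, (∑ k : Fin m, ((A k).filter (fun t => σ k t = some i)).card) = (jobs i).p)

/-- Energy of an `m`-machine solution with active sets `A`. -/
noncomputable def energy {m : ℕ} (q : ℝ) (A : Fin m → Finset ℕ) : ℝ :=
  ∑ k : Fin m, cost q (A k)

/-- Number of machines active at slot `t`. -/
noncomputable def activeCount {m : ℕ} (A : Fin m → Finset ℕ) (t : ℕ) : ℕ :=
  (Finset.univ.filter (fun k : Fin m => t ∈ A k)).card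

/-- `BlackoutFeasible n m jobs a b ℓ`: `ℓ ≤ m` and there is a feasible `m`-machine solution
in which at most `m − ℓ` machines are active at every slot `t` with `a ≤ t ≤ b − 1`.
`l a b` is the greatest such `ℓ`. -/
def BlackoutFeasible (n m : ℕ) (jobs : Fin n → Job) (a b ℓ : ℕ) : Prop :=
  ℓ ≤ m ∧ ∃ (A : Fin m → Finset ℕ) (σ : Fin m → ℕ → Option (Fin n)),
    MFeasible jobs A σ ∧ ∀ t : ℕ, a ≤ t → t < b → activeCount A t ≤ m - ℓ

/-- An `m`-machine skeleton: for all `a < b` there is a slot `t` with `a ≤ t ≤ b − 1` at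
which at least `m − l(a,b)` machines are active. -/
def MSkeleton {n : ℕ} (m : ℕ) (jobs : Fin n → Job) (l : ℕ → ℕ → ℕ)
    (B : Fin m → Finset ℕ) : Prop :=
  ∀ a b : ℕ, a < b → ∃ t : ℕ, a ≤ t ∧ t < b ∧ m - l a b ≤ activeCount B t

/-!
By Hall's theorem, machines of which `w t` are active in slot `t` can process the jobs iff every
set `Y` of slots has capacity `∑ t ∈ Y, w t` at least the work that the jobs are forced to do in
`Y`. The forced work is supermodular in `Y`, so the tight sets, where its excess over the capacity
is largest, are closed under intersection, and there is a least one.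

Start from a minimum skeleton. Whenever some slot `s` of the least tight set has a neighbouring slot
with more active machines, switch on in `s` a machine that is active in that neighbour: this costs
at most one unit of energy and lowers the excess, so it happens at most `P` times. Once no such
slot is left, the profile has a constant value `c` on each run of consecutive slots of the least
tight set and is at most `c` just outside it. By tightness at most `c` jobs with forced work
straddle each end of the run, and by the skeleton property capacity `c` is enough for the jobs
inside it. Hence capacity `3 * c` suffices on the run, and the tripled profile, truncated at `m`,
satisfies the cut condition. Running each level set of the profile on three machines realises it
with at most three times the energy.
-/

section

open Finset

variable {ι : Type*}

/-- The slots in which a job may run. -/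
def Job.span (j : Job) : Finset ℕ := Ico j.r j.d

/-- The work of `j` that every schedule has to place inside `Y`, because the slots of the span
outside `Y` cannot hold it. The truncated subtraction makes it `0` when they can. -/
noncomputable def Job.forced (j : Job) (Y : Finset ℕ) : ℕ := j.p - #(j.span \ Y)

namespace Job

variable (j : Job)

lemma forced_mono {Y Z : Finset ℕ} (h : Y ⊆ Z) : j.forced Y ≤ j.forced Z :=
  Nat.sub_le_sub_left (card_le_card (sdiff_subset_sdiff le_rfl h)) _

lemma forced_add_forced_le (Y Z : Finset ℕ) :
    j.forced Y + j.forced Z ≤ j.forced (Y ∪ Z) + j.forced (Y ∩ Z) := by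
  have hcard := card_union_add_card_inter (j.span \ Y) (j.span \ Z)
  have hY : #(j.span \ Y ∩ (j.span \ Z)) ≤ #(j.span \ Y) := card_le_card inter_subset_left
  have hZ : #(j.span \ Y ∩ (j.span \ Z)) ≤ #(j.span \ Z) := card_le_card inter_subset_right
  rw [← sdiff_inter_distrib_right, ← sdiff_union_distrib] at hcard
  rw [← sdiff_union_distrib] at hY hZ
  unfold forced
  omega

lemma forced_lt_forced_insert {Y : Finset ℕ} {s : ℕ} (hsY : s ∉ Y) (hs : s ∈ j.span)
    (hpos : 0 < j.forced Y) : j.forced Y < j.forced (insert s Y) := by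
  have hcard : #(j.span \ insert s Y) + 1 = #(j.span \ Y) := by
    rw [sdiff_insert, card_erase_add_one (mem_sdiff.2 ⟨hs, hsY⟩)]
  unfold forced at *
  omega

lemma forced_le_forced_sdiff_add_card (Y I : Finset ℕ) :
    j.forced Y ≤ j.forced (Y \ I) + #(Y ∩ I) := by
  have hsub : j.span \ (Y \ I) ⊆ j.span \ Y ∪ Y ∩ I := by grind
  have hcard := (card_le_card hsub).trans (card_union_le _ _)
  unfold forced
  omega

lemma forced_inter_of_span_subset {I : Finset ℕ} (h : j.span ⊆ I) (Y : Finset ℕ) :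
    j.forced (Y ∩ I) = j.forced Y := by
  rw [forced, forced, sdiff_inter_distrib_right, sdiff_eq_empty_iff_subset.2 h, union_empty]

lemma forced_sdiff_of_disjoint {I : Finset ℕ} (h : Disjoint j.span I) (Y : Finset ℕ) :
    j.forced (Y \ I) = j.forced Y := by
  have hspan : j.span \ (Y \ I) = j.span \ Y := by
    rw [sdiff_sdiff_right', disjoint_iff.1 h, sup_bot_eq]
  rw [forced, forced, hspan]

lemma mem_span_of_not_subset_Ico_of_not_disjoint {a b : ℕ} (hsub : ¬ j.span ⊆ Ico a b)
    (hdisj : ¬ Disjoint j.span (Ico a b)) : (∃ s, s + 1 = a ∧ s ∈ j.span) ∨ b ∈ j.span := by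
  obtain ⟨x, hx, hxI⟩ := not_subset.1 hsub
  obtain ⟨y, hy, hyI⟩ := not_disjoint_iff.1 hdisj
  simp only [span, mem_Ico] at *
  by_cases hxa : x < a
  · exact .inl ⟨a - 1, by omega, by omega⟩
  · exact .inr (by omega)

end Job

section Demand

variable [Fintype ι] (jobs : ι → Job)

/-- The total work that every schedule has to place inside `Y`. -/
noncomputable def demand (Y : Finset ℕ) : ℕ := ∑ i, (jobs i).forced Y

/-- The jobs with forced work in `Y` that may also run in slot `s`. -/
noncomputable def straddling (Y : Finset ℕ) (s : ℕ) : Finset ι :=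
  {i | s ∈ (jobs i).span ∧ 0 < (jobs i).forced Y}

/-- The jobs with forced work in `Y` that may run both inside and outside `I`. -/
noncomputable def cutJobs (Y I : Finset ℕ) : Finset ι :=
  {i | 0 < (jobs i).forced Y ∧ ¬ (jobs i).span ⊆ I ∧ ¬ Disjoint (jobs i).span I}

lemma demand_le_sum_p (Y : Finset ℕ) : demand jobs Y ≤ ∑ i, (jobs i).p :=
  sum_le_sum fun _ _ => Nat.sub_le _ _

lemma demand_add_demand_le (Y Z : Finset ℕ) :
    demand jobs Y + demand jobs Z ≤ demand jobs (Y ∪ Z) + demand jobs (Y ∩ Z) := by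
  simp only [demand, ← sum_add_distrib]
  exact sum_le_sum fun i _ => (jobs i).forced_add_forced_le Y Z

lemma demand_add_card_straddling_le {Y : Finset ℕ} {s : ℕ} (hs : s ∉ Y) :
    demand jobs Y + #(straddling jobs Y s) ≤ demand jobs (insert s Y) := by
  rw [demand, demand, straddling, card_filter, ← sum_add_distrib]
  refine sum_le_sum fun i _ => ?_
  split_ifs with h
  · exact (jobs i).forced_lt_forced_insert hs h.1 h.2
  · exact (jobs i).forced_mono (subset_insert s Y)

lemma demand_le_demand_sdiff_add_demand_inter (Y I : Finset ℕ) :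
    demand jobs Y ≤
      demand jobs (Y \ I) + demand jobs (Y ∩ I) + #(cutJobs jobs Y I) * #(Y ∩ I) := by
  rw [demand, demand, demand, cutJobs, card_filter, sum_mul, ← sum_add_distrib,
    ← sum_add_distrib]
  refine sum_le_sum fun i _ => ?_
  have hsub := (jobs i).forced_le_forced_sdiff_add_card Y I
  have hin := fun h => (jobs i).forced_inter_of_span_subset (I := I) h Y
  have hout := fun h => (jobs i).forced_sdiff_of_disjoint (I := I) h Y
  split_ifs with h
  · omega
  · simp only [not_and_or, not_not, not_lt, Nat.le_zero] at h
    rcases h with h0 | h | h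
    · omega
    · rw [hin h]
      omega
    · rw [hout h]
      omega

lemma cutJobs_mono {Y Z : Finset ℕ} (h : Y ⊆ Z) (I : Finset ℕ) :
    cutJobs jobs Y I ⊆ cutJobs jobs Z I :=
  monotone_filter_right _ fun i _ hi => ⟨hi.1.trans_le ((jobs i).forced_mono h), hi.2⟩

lemma card_cutJobs_Ico_le {Y : Finset ℕ} {a b c : ℕ}
    (ha : ∀ s, s + 1 = a → #(straddling jobs Y s) ≤ c) (hb : #(straddling jobs Y b) ≤ c) :
    #(cutJobs jobs Y (Ico a b)) ≤ 2 * c := by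
  have hcut {i} (hi : i ∈ cutJobs jobs Y (Ico a b)) :
      (∃ s, s + 1 = a ∧ i ∈ straddling jobs Y s) ∨ i ∈ straddling jobs Y b := by
    obtain ⟨hpos, hsub, hdisj⟩ := (mem_filter.1 hi).2
    have := (jobs i).mem_span_of_not_subset_Ico_of_not_disjoint hsub hdisj
    simpa only [straddling, mem_filter_univ, hpos, and_true] using this
  rcases a with _ | a
  · have hsub : cutJobs jobs Y (Ico 0 b) ⊆ straddling jobs Y b := fun i hi =>
      (hcut hi).resolve_left fun ⟨s, hs, _⟩ => s.succ_ne_zero hs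
    have := card_le_card hsub
    omega
  · have hsub : cutJobs jobs Y (Ico (a + 1) b) ⊆ straddling jobs Y a ∪ straddling jobs Y b :=
      fun i hi => mem_union.2 <| (hcut hi).imp_left fun ⟨s, hs, his⟩ => by
        rwa [Nat.succ.inj hs] at his
    have := (card_le_card hsub).trans (card_union_le _ _)
    have := ha a rfl
    omega

end Demand

section CutCriterion

lemma exists_matching_of_sum_capacity {α β : Type*} [Nonempty β] [DecidableEq β] (S : Finset α)
    (N : α → Finset β) (cap : β → ℕ) (h : ∀ s ⊆ S, #s ≤ ∑ b ∈ s.biUnion N, cap b) :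
    ∃ f : α → β, (∀ x ∈ S, f x ∈ N x) ∧ ∀ b, #{x ∈ S | f x = b} ≤ cap b := by
  let copies (B : Finset β) : Finset (Σ _ : β, ℕ) := B.sigma fun b => range (cap b)
  have hall (s : Finset S) : #s ≤ #(s.biUnion fun x => copies (N x)) := by
    have hcopies : (s.biUnion fun x => copies (N x)) =
        copies ((s.map (.subtype _)).biUnion N) := by
      ext ⟨b, k⟩
      simp only [copies, mem_biUnion, mem_sigma, mem_map, Function.Embedding.subtype_apply]
      grind
    have hS := h (s.map (.subtype _)) fun x hx => by
      obtain ⟨y, -, rfl⟩ := mem_map.1 hx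
      exact y.2
    simpa only [hcopies, copies, card_sigma, card_range, card_map] using hS
  obtain ⟨F, hF, hFN⟩ := (all_card_le_biUnion_card_iff_exists_injective _).1 hall
  have hmem (x : S) : (F x).1 ∈ N x ∧ (F x).2 < cap (F x).1 := by
    simpa only [copies, mem_sigma, mem_range] using hFN x
  refine ⟨fun x => if hx : x ∈ S then (F ⟨x, hx⟩).1 else Classical.arbitrary β, fun x hx => ?_,
    fun b => ?_⟩
  · simpa only [dif_pos hx] using (hmem ⟨x, hx⟩).1
  · refine (card_le_card_of_injOn (t := range (cap b))
      (fun x => if hx : x ∈ S then (F ⟨x, hx⟩).2 else 0) ?_ ?_).trans_eq (card_range _)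
    · intro x hx
      obtain ⟨hxS, rfl⟩ := mem_filter.1 hx
      simpa only [dif_pos hxS, coe_range, Set.mem_Iio] using (hmem ⟨x, hxS⟩).2
    · intro x hx y hy hxy
      obtain ⟨hxS, hxb⟩ := mem_filter.1 hx
      obtain ⟨hyS, hyb⟩ := mem_filter.1 hy
      simp only [dif_pos hxS, dif_pos hyS] at hxb hyb hxy
      exact congrArg Subtype.val (hF (Sigma.ext (hxb.trans hyb.symm) (heq_of_eq hxy)))

/-- A schedule without machine names: each job receives `p` slots of its span, and slot `t`
serves at most `w t` jobs. -/
structure IsSlotAssignment [Fintype ι] (jobs : ι → Job) (w : ℕ → ℕ) (Q : ι → Finset ℕ) :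
    Prop where
  subset_span : ∀ i, Q i ⊆ (jobs i).span
  card_eq : ∀ i, #(Q i) = (jobs i).p
  load_le : ∀ t, #{i | t ∈ Q i} ≤ w t

variable [Fintype ι] {jobs : ι → Job} {w : ℕ → ℕ}

lemma IsSlotAssignment.demand_le {Q : ι → Finset ℕ} (h : IsSlotAssignment jobs w Q)
    (Y : Finset ℕ) : demand jobs Y ≤ ∑ t ∈ Y, w t := by
  have hforced (i) : (jobs i).forced Y ≤ #{t ∈ Y | t ∈ Q i} := by
    have hout : #(Q i \ Y) ≤ #((jobs i).span \ Y) :=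
      card_le_card (sdiff_subset_sdiff (h.subset_span i) le_rfl)
    have hsplit := card_inter_add_card_sdiff (Q i) Y
    rw [h.card_eq, inter_comm, ← filter_mem_eq_inter] at hsplit
    unfold Job.forced
    omega
  calc demand jobs Y ≤ ∑ i, #{t ∈ Y | t ∈ Q i} := sum_le_sum fun i _ => hforced i
    _ = ∑ t ∈ Y, #{i | t ∈ Q i} :=
      sum_card_bipartiteAbove_eq_sum_card_bipartiteBelow fun i t => t ∈ Q i
    _ ≤ ∑ t ∈ Y, w t := sum_le_sum fun t _ => h.load_le t

/-- The pairs (job, slot) with the slot in the span of the job. -/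
noncomputable def spanPairs (jobs : ι → Job) : Finset (Σ _ : ι, ℕ) :=
  univ.sigma fun i => (jobs i).span

-- Each pair of a job and a slot in its span is matched either to a unit of capacity of the slot
-- or to one of the `#span - p` idle units of the job; Hall's condition is the cut condition.
lemma exists_spanPairs_matching (h : ∀ Y, demand jobs Y ≤ ∑ t ∈ Y, w t) :
    ∃ f : (Σ _ : ι, ℕ) → ℕ ⊕ ι,
      (∀ x ∈ spanPairs jobs, f x = .inl x.2 ∨ f x = .inr x.1) ∧
      (∀ t, #{x ∈ spanPairs jobs | f x = .inl t} ≤ w t) ∧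
      ∀ i, #{x ∈ spanPairs jobs | f x = .inr i} ≤ #(jobs i).span - (jobs i).p := by
  let idle (i : ι) : ℕ := #(jobs i).span - (jobs i).p
  have hall : ∀ s ⊆ spanPairs jobs,
      #s ≤ ∑ b ∈ s.biUnion fun x => {.inl x.2, .inr x.1}, Sum.elim w idle b := by
    intro s hs
    let Y := s.image Sigma.snd
    let J := s.image Sigma.fst
    have hnodes : (s.biUnion fun x => {.inl x.2, .inr x.1}) = Y.disjSum J := by
      ext (t | i) <;> simp [Y, J, eq_comm]
    have hpairs : s ⊆ J.sigma fun i => (jobs i).span ∩ Y := fun x hx =>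
      mem_sigma.2 ⟨mem_image_of_mem _ hx,
        mem_inter.2 ⟨(mem_sigma.1 (hs hx)).2, mem_image_of_mem _ hx⟩⟩
    rw [hnodes, sum_disjSum]
    calc #s ≤ ∑ i ∈ J, #((jobs i).span ∩ Y) := (card_le_card hpairs).trans_eq (card_sigma _ _)
      _ ≤ ∑ i ∈ J, ((jobs i).forced Y + idle i) := sum_le_sum fun i _ => by
        have := card_inter_add_card_sdiff (jobs i).span Y
        simp only [Job.forced, idle]
        omega
      _ = ∑ i ∈ J, (jobs i).forced Y + ∑ i ∈ J, idle i := sum_add_distrib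
      _ ≤ demand jobs Y + ∑ i ∈ J, idle i :=
        Nat.add_le_add_right (sum_le_sum_of_subset (subset_univ _)) _
      _ ≤ ∑ t ∈ Y, w t + ∑ i ∈ J, idle i := Nat.add_le_add_right (h Y) _
  obtain ⟨f, hf, hcap⟩ := exists_matching_of_sum_capacity _ _ _ hall
  exact ⟨f, fun x hx => by simpa using hf x hx, fun t => hcap (.inl t), fun i => hcap (.inr i)⟩

lemma exists_isSlotAssignment (h : ∀ Y, demand jobs Y ≤ ∑ t ∈ Y, w t) :
    ∃ Q, IsSlotAssignment jobs w Q := by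
  obtain ⟨f, hf, hslot, hidle⟩ := exists_spanPairs_matching h
  let R (i : ι) : Finset ℕ := {t ∈ (jobs i).span | f ⟨i, t⟩ = .inl t}
  have hp (i) : (jobs i).p ≤ #(jobs i).span := by
    have : (jobs i).forced ∅ ≤ demand jobs ∅ :=
      single_le_sum (f := fun i => (jobs i).forced ∅) (fun _ _ => Nat.zero_le _) (mem_univ i)
    have := h ∅
    simp only [Job.forced, sdiff_empty, sum_empty] at *
    omega
  have hR (i) : (jobs i).p ≤ #(R i) := by
    have hrest : #{t ∈ (jobs i).span | ¬ f ⟨i, t⟩ = .inl t} ≤ #(jobs i).span - (jobs i).p := by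
      refine le_trans (card_le_card_of_injOn (fun t => ⟨i, t⟩) (fun t ht => ?_) ?_) (hidle i)
      · obtain ⟨hspan, hne⟩ := mem_filter.1 ht
        have hpair : ⟨i, t⟩ ∈ spanPairs jobs := mem_sigma.2 ⟨mem_univ i, hspan⟩
        exact mem_coe.2 (mem_filter.2 ⟨hpair, (hf _ hpair).resolve_left hne⟩)
      · exact fun t _ t' _ htt' => eq_of_heq (Sigma.mk.inj htt').2
    have hsplit := card_filter_add_card_filter_not (s := (jobs i).span) fun t => f ⟨i, t⟩ = .inl t
    have := hp i
    simp only [R]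
    omega
  choose Q hQR hQ using fun i => exists_subset_card_eq (hR i)
  refine ⟨Q, fun i => (hQR i).trans (filter_subset _ _), hQ, fun t => ?_⟩
  refine le_trans (card_le_card_of_injOn (fun i => ⟨i, t⟩) (fun i hi => ?_) ?_) (hslot t)
  · obtain ⟨hspan, hft⟩ := mem_filter.1 (hQR i (mem_filter.1 hi).2)
    exact mem_coe.2 (mem_filter.2 ⟨mem_sigma.2 ⟨mem_univ i, hspan⟩, hft⟩)
  · exact fun i _ i' _ hii' => congrArg Sigma.fst hii'

lemma exists_isSlotAssignment_iff :
    (∃ Q, IsSlotAssignment jobs w Q) ↔ ∀ Y, demand jobs Y ≤ ∑ t ∈ Y, w t :=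
  ⟨fun ⟨_, hQ⟩ => hQ.demand_le, exists_isSlotAssignment⟩

end CutCriterion

section Machines

lemma exists_partial_matching {α β : Type*} {I : Finset α} {K : Finset β} (h : #I ≤ #K) :
    ∃ τ : β → Option α, (∀ k, (τ k).isSome → k ∈ K) ∧ (∀ k i, τ k = some i → i ∈ I) ∧
      ∀ i ∈ I, ∃! k, τ k = some i := by
  obtain ⟨e⟩ : Nonempty (I ↪ K) := Function.Embedding.nonempty_of_card_le (by simpa using h)
  let g : I → β := fun i => e i
  have hg : Function.Injective g := Subtype.val_injective.comp e.injective
  have hinv (k : β) (i : α) : (Function.partialInv g k).map Subtype.val = some i ↔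
      ∃ hi : i ∈ I, g ⟨i, hi⟩ = k := by
    simp only [Option.map_eq_some_iff, hg.isPartialInv _ _, Subtype.exists, exists_and_right,
      exists_eq_right]
  refine ⟨fun k => (Function.partialInv g k).map Subtype.val, fun k hk => ?_, fun k i hk => ?_,
    fun i hi => ⟨g ⟨i, hi⟩, (hinv _ _).2 ⟨hi, rfl⟩, fun k hk => ?_⟩⟩
  · obtain ⟨i, hik⟩ := Option.isSome_iff_exists.1 hk
    obtain ⟨hi, rfl⟩ := (hinv k i).1 hik
    exact (e ⟨i, hi⟩).2
  · exact ((hinv k i).1 hk).1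
  · exact ((hinv k i).1 hk).2.symm

variable {n m : ℕ} {jobs : Fin n → Job} {A : Fin m → Finset ℕ} {σ : Fin m → ℕ → Option (Fin n)}

/-- The active slots in which `σ` runs job `i` on some machine. -/
noncomputable def jobSlots (A : Fin m → Finset ℕ) (σ : Fin m → ℕ → Option (Fin n)) (i : Fin n) :
    Finset ℕ :=
  univ.biUnion fun k => {t ∈ A k | σ k t = some i}

lemma mem_jobSlots {i : Fin n} {t : ℕ} :
    t ∈ jobSlots A σ i ↔ ∃ k, t ∈ A k ∧ σ k t = some i := by
  simp only [jobSlots, mem_biUnion, mem_univ, true_and, mem_filter]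

lemma card_jobSlots {i : Fin n}
    (hσ : ∀ k k' t, σ k t = some i → σ k' t = some i → k = k') :
    #(jobSlots A σ i) = ∑ k, #{t ∈ A k | σ k t = some i} :=
  card_biUnion fun k _ k' _ hne => disjoint_left.2 fun t ht ht' =>
    hne (hσ k k' t (mem_filter.1 ht).2 (mem_filter.1 ht').2)

lemma MFeasible.isSlotAssignment (h : MFeasible jobs A σ) :
    IsSlotAssignment jobs (activeCount A) (jobSlots A σ) where
  subset_span i t ht := by
    obtain ⟨k, -, hk⟩ := mem_jobSlots.1 ht
    exact mem_Ico.2 (h.2.1 k t i hk)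
  card_eq i := (card_jobSlots fun k k' t => h.2.2.1 k k' t i).trans (h.2.2.2 i)
  load_le t := by
    refine card_le_card_of_forall_subsingleton (fun i k => σ k t = some i) ?_ ?_
    · intro i hi
      obtain ⟨k, htk, hk⟩ := mem_jobSlots.1 (mem_filter.1 hi).2
      exact ⟨k, mem_filter.2 ⟨mem_univ k, htk⟩, hk⟩
    · exact fun k _ i hi i' hi' => Option.some.inj (hi.2.symm.trans hi'.2)

lemma IsSlotAssignment.exists_mFeasible {Q : Fin n → Finset ℕ}
    (h : IsSlotAssignment jobs (activeCount A) Q) : ∃ σ, MFeasible jobs A σ := by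
  choose τ hactive hQ huniq using fun t => exists_partial_matching (h.load_le t)
  simp only [mem_filter_univ] at hactive hQ huniq
  have hslots (i) : jobSlots A (fun k t => τ t k) i = Q i := by
    ext t
    rw [mem_jobSlots]
    constructor
    · rintro ⟨k, -, hk⟩
      exact hQ t k i hk
    · intro ht
      obtain ⟨k, hk, -⟩ := huniq t i ht
      exact ⟨k, hactive t k (hk ▸ rfl), hk⟩
  have hinj (k k' t i) (hk : τ t k = some i) (hk' : τ t k' = some i) : k = k' :=
    (huniq t i (hQ t k i hk)).unique hk hk'
  refine ⟨fun k t => τ t k, fun k t => hactive t k,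
    fun k t i hk => mem_Ico.1 (h.subset_span i (hQ t k i hk)), hinj, fun i => ?_⟩
  rw [← card_jobSlots fun k k' t => hinj k k' t i, hslots, h.card_eq]

theorem exists_mFeasible_iff :
    (∃ σ, MFeasible jobs A σ) ↔ ∀ Y, demand jobs Y ≤ ∑ t ∈ Y, activeCount A t :=
  Iff.trans ⟨fun ⟨_, hσ⟩ => ⟨_, hσ.isSlotAssignment⟩, fun ⟨_, hQ⟩ => hQ.exists_mFeasible⟩
    exists_isSlotAssignment_iff

end Machines

section Deficiency

variable [Fintype ι] {jobs : ι → Job} {w : ℕ → ℕ} {Y Z : Finset ℕ}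

/-- The largest amount by which the demand of a set of slots exceeds the capacity `w` there; by
`exists_isSlotAssignment_iff` it vanishes iff the jobs can be scheduled within `w`. -/
noncomputable def deficiency (jobs : ι → Job) (w : ℕ → ℕ) : ℕ :=
  ⨆ Y : Finset ℕ, (demand jobs Y - ∑ t ∈ Y, w t)

/-- A set of slots attaining the deficiency. -/
def IsTight (jobs : ι → Job) (w : ℕ → ℕ) (Y : Finset ℕ) : Prop :=
  demand jobs Y = ∑ t ∈ Y, w t + deficiency jobs w

lemma deficiency_le_sum_p : deficiency jobs w ≤ ∑ i, (jobs i).p :=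
  ciSup_le fun Y => (Nat.sub_le _ _).trans (demand_le_sum_p jobs Y)

lemma bddAbove_range_demand_sub_sum (jobs : ι → Job) (w : ℕ → ℕ) :
    BddAbove (Set.range fun Y => demand jobs Y - ∑ t ∈ Y, w t) :=
  ⟨∑ i, (jobs i).p, Set.forall_mem_range.2 fun Y =>
    (Nat.sub_le _ _).trans (demand_le_sum_p jobs Y)⟩

lemma demand_le_sum_add_deficiency (Y : Finset ℕ) :
    demand jobs Y ≤ ∑ t ∈ Y, w t + deficiency jobs w :=
  Nat.sub_le_iff_le_add'.1 (le_ciSup (bddAbove_range_demand_sub_sum jobs w) Y)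

lemma exists_isTight (jobs : ι → Job) (w : ℕ → ℕ) : ∃ Y, IsTight jobs w Y := by
  obtain h0 | hpos := Nat.eq_zero_or_pos (deficiency jobs w)
  · have := demand_le_sum_add_deficiency (jobs := jobs) (w := w) ∅
    rw [h0, sum_empty] at this
    exact ⟨∅, by rw [IsTight, h0, sum_empty, Nat.le_zero.1 this]⟩
  · obtain ⟨Y, hY⟩ : deficiency jobs w ∈ Set.range fun Y => demand jobs Y - ∑ t ∈ Y, w t :=
      Nat.sSup_mem (Set.range_nonempty _) (bddAbove_range_demand_sub_sum jobs w)
    dsimp only at hY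
    exact ⟨Y, by unfold IsTight; omega⟩

lemma IsTight.inter (hY : IsTight jobs w Y) (hZ : IsTight jobs w Z) :
    IsTight jobs w (Y ∩ Z) := by
  have hdemand := demand_add_demand_le jobs Y Z
  have hsum := sum_union_inter (s₁ := Y) (s₂ := Z) (f := w)
  have hunion := demand_le_sum_add_deficiency (jobs := jobs) (w := w) (Y ∪ Z)
  have hinter := demand_le_sum_add_deficiency (jobs := jobs) (w := w) (Y ∩ Z)
  unfold IsTight at *
  omega

lemma exists_isLeast_isTight (jobs : ι → Job) (w : ℕ → ℕ) :
    ∃ Y, IsLeast {Y | IsTight jobs w Y} Y := by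
  obtain ⟨Y, hY⟩ := exists_minimal_of_wellFoundedLT _ (exists_isTight jobs w)
  exact ⟨Y, hY.prop, fun Z hZ =>
    inter_eq_left.1 (hY.eq_of_le (hY.prop.inter hZ) inter_subset_left)⟩

-- A tight set for `w'` loses capacity when passing to `w`; a strict loss happens unless it is
-- also tight for `w`, and then it contains `Y`, hence `s`.
lemma deficiency_lt_of_lt {w' : ℕ → ℕ} {s : ℕ} (hY : IsLeast {Y | IsTight jobs w Y} Y)
    (hs : s ∈ Y) (hle : w ≤ w') (hlt : w s < w' s) : deficiency jobs w' < deficiency jobs w := by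
  obtain ⟨Z, hZ⟩ := exists_isTight jobs w'
  have hcut := demand_le_sum_add_deficiency (jobs := jobs) (w := w) Z
  have hsum : ∑ t ∈ Z, w t ≤ ∑ t ∈ Z, w' t := sum_le_sum fun t _ => hle t
  by_contra! hge
  have hZw : IsTight jobs w Z := by
    unfold IsTight at *
    omega
  have hsum_lt : ∑ t ∈ Z, w t < ∑ t ∈ Z, w' t :=
    sum_lt_sum (fun t _ => hle t) ⟨s, hY.2 hZw hs, hlt⟩
  unfold IsTight at hZ
  omega

lemma IsTight.card_straddling_le {s : ℕ} (hY : IsTight jobs w Y) (hs : s ∉ Y) :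
    #(straddling jobs Y s) ≤ w s := by
  have hinsert := demand_add_card_straddling_le jobs hs
  have hcut := demand_le_sum_add_deficiency (jobs := jobs) (w := w) (insert s Y)
  rw [sum_insert hs] at hcut
  unfold IsTight at hY
  omega

end Deficiency

section Tripling

lemma exists_Ico_component {Y : Finset ℕ} {t : ℕ} (ht : t ∈ Y) :
    ∃ a b, t ∈ Ico a b ∧ Ico a b ⊆ Y ∧ b ∉ Y ∧ ∀ s, s + 1 = a → s ∉ Y := by
  have hleft : ∃ a, Icc a t ⊆ Y := ⟨t, by simpa using ht⟩
  have hright : ∃ b, t < b ∧ b ∉ Y :=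
    ⟨Y.sup id + 1, Nat.lt_succ_of_le (le_sup (f := id) ht), fun h =>
      (Nat.lt_succ_self _).not_ge (le_sup (f := id) h)⟩
  obtain ⟨htb, hb⟩ := Nat.find_spec hright
  have hat : Nat.find hleft ≤ t := Nat.find_min' hleft (by simpa using ht)
  refine ⟨Nat.find hleft, Nat.find hright, mem_Ico.2 ⟨hat, htb⟩, fun x hx => ?_, hb,
    fun s hs hsY => ?_⟩
  · obtain ⟨hax, hxb⟩ := mem_Ico.1 hx
    obtain hxt | htx := le_or_gt x t
    · exact Nat.find_spec hleft (mem_Icc.2 ⟨hax, hxt⟩)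
    · exact not_not.1 fun hxY => Nat.find_min hright hxb ⟨htx, hxY⟩
  · refine Nat.find_min hleft (m := s) (by omega) fun x hx => ?_
    obtain ⟨hsx, hxt⟩ := mem_Icc.1 hx
    obtain rfl | hlt := hsx.eq_or_lt
    · exact hsY
    · exact Nat.find_spec hleft (mem_Icc.2 ⟨by omega, hxt⟩)

/-- On `Y` the profile `w` is at least as large as at both adjacent slots, so it is constant on
runs of consecutive slots of `Y` and no larger just outside them. -/
def DominatesNeighbors (w : ℕ → ℕ) (Y : Finset ℕ) : Prop :=
  ∀ s ∈ Y, ∀ t, s + 1 = t ∨ t + 1 = s → w t ≤ w s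

lemma DominatesNeighbors.eq_of_mem_Ico {w : ℕ → ℕ} {Y : Finset ℕ} {a b s t : ℕ}
    (h : DominatesNeighbors w Y) (hI : Ico a b ⊆ Y) (hs : s ∈ Ico a b) (ht : t ∈ Ico a b) :
    w s = w t := by
  have hleft {x} (hx : x ∈ Ico a b) : w x = w a := by
    obtain ⟨hax, hxb⟩ := mem_Ico.1 hx
    clear hx
    induction x, hax using Nat.le_induction with
    | base => rfl
    | succ x hax ih =>
      have hx : x ∈ Y := hI (mem_Ico.2 ⟨hax, by omega⟩)
      have hx' : x + 1 ∈ Y := hI (mem_Ico.2 ⟨by omega, hxb⟩)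
      rw [← ih (by omega)]
      exact (h x hx _ (.inl rfl)).antisymm (h (x + 1) hx' _ (.inr rfl))
  rw [hleft hs, hleft ht]

variable [Fintype ι] {jobs : ι → Job} {w : ℕ → ℕ} {Y Y₀ : Finset ℕ} {m : ℕ}

/-- The skeleton condition in terms of the number `w t` of active machines: every interval has a
slot `t` such that the cut condition holds inside the interval with constant capacity `w t`. -/
def IsSkeletonProfile (jobs : ι → Job) (w : ℕ → ℕ) : Prop :=
  ∀ a b, a < b → ∃ t ∈ Ico a b, ∀ Z ⊆ Ico a b, demand jobs Z ≤ #Z * w t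

lemma IsSkeletonProfile.mono {w' : ℕ → ℕ} (hskel : IsSkeletonProfile jobs w) (h : w ≤ w') :
    IsSkeletonProfile jobs w' := by
  intro a b hab
  obtain ⟨t, ht, hdemand⟩ := hskel a b hab
  exact ⟨t, ht, fun Z hZ => (hdemand Z hZ).trans (Nat.mul_le_mul_left _ (h t))⟩

lemma IsSkeletonProfile.exists_component_bound (hskel : IsSkeletonProfile jobs w)
    (htight : IsTight jobs w Y₀) (hdom : DominatesNeighbors w Y₀) (hY : Y ⊆ Y₀) {t : ℕ}
    (ht : t ∈ Y) :
    ∃ I : Finset ℕ, t ∈ I ∧ (∀ s ∈ I, w s = w t) ∧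
      demand jobs Y ≤ demand jobs (Y \ I) + #(Y ∩ I) * (3 * w t) := by
  obtain ⟨a, b, htI, hI, hb, ha⟩ := exists_Ico_component (hY ht)
  have hconst {s} (hs : s ∈ Ico a b) : w s = w t := hdom.eq_of_mem_Ico hI hs htI
  have hab : a < b := nonempty_Ico.1 ⟨t, htI⟩
  have hstraddle_left (s) (hs : s + 1 = a) : #(straddling jobs Y₀ s) ≤ w t := by
    have haI : a ∈ Ico a b := left_mem_Ico.2 hab
    exact (htight.card_straddling_le (ha s hs)).trans
      ((hdom a (hI haI) s (.inr hs)).trans_eq (hconst haI))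
  have hstraddle_right : #(straddling jobs Y₀ b) ≤ w t := by
    have hbI : b - 1 ∈ Ico a b := mem_Ico.2 ⟨by omega, by omega⟩
    exact (htight.card_straddling_le hb).trans
      ((hdom (b - 1) (hI hbI) b (.inl (by omega))).trans_eq (hconst hbI))
  have hcut : #(cutJobs jobs Y (Ico a b)) ≤ 2 * w t :=
    (card_le_card (cutJobs_mono jobs hY _)).trans
      (card_cutJobs_Ico_le jobs hstraddle_left hstraddle_right)
  have hinside : demand jobs (Y ∩ Ico a b) ≤ #(Y ∩ Ico a b) * w t := by
    obtain ⟨s, hs, hdemand⟩ := hskel a b hab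
    exact hconst hs ▸ hdemand _ inter_subset_right
  refine ⟨Ico a b, htI, fun s hs => hconst hs, ?_⟩
  calc demand jobs Y
      ≤ demand jobs (Y \ Ico a b) + demand jobs (Y ∩ Ico a b)
          + #(cutJobs jobs Y (Ico a b)) * #(Y ∩ Ico a b) :=
        demand_le_demand_sdiff_add_demand_inter jobs Y _
    _ ≤ demand jobs (Y \ Ico a b) + #(Y ∩ Ico a b) * w t + 2 * w t * #(Y ∩ Ico a b) := by gcongr
    _ = demand jobs (Y \ Ico a b) + #(Y ∩ Ico a b) * (3 * w t) := by ring

lemma IsSkeletonProfile.demand_le_sum_min_of_subset (hskel : IsSkeletonProfile jobs w)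
    (htight : IsTight jobs w Y₀) (hdom : DominatesNeighbors w Y₀)
    (hm : ∀ Z, demand jobs Z ≤ #Z * m) (hY : Y ⊆ Y₀) :
    demand jobs Y ≤ ∑ t ∈ Y, min m (3 * w t) := by
  induction Y using Finset.strongInduction with
  | H Y ih =>
    by_cases hall : ∀ t ∈ Y, m ≤ 3 * w t
    · calc demand jobs Y ≤ #Y * m := hm Y
        _ = ∑ t ∈ Y, min m (3 * w t) := by
          rw [sum_congr rfl fun t ht => min_eq_left (hall t ht), sum_const, smul_eq_mul]
    push Not at hall
    obtain ⟨t, ht, htm⟩ := hall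
    obtain ⟨I, htI, hconst, hbound⟩ := hskel.exists_component_bound htight hdom hY ht
    have hssub : Y \ I ⊂ Y :=
      ssubset_iff_of_subset sdiff_subset |>.2 ⟨t, ht, fun h => (mem_sdiff.1 h).2 htI⟩
    have hI : ∑ s ∈ Y ∩ I, min m (3 * w s) = #(Y ∩ I) * (3 * w t) := by
      rw [sum_congr rfl fun s hs => by rw [hconst s (mem_inter.1 hs).2, min_eq_right htm.le],
        sum_const, smul_eq_mul]
    calc demand jobs Y ≤ demand jobs (Y \ I) + #(Y ∩ I) * (3 * w t) := hbound
      _ ≤ ∑ s ∈ Y \ I, min m (3 * w s) + ∑ s ∈ Y ∩ I, min m (3 * w s) := by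
        rw [hI]
        exact Nat.add_le_add_right (ih _ hssub (sdiff_subset.trans hY)) _
      _ = ∑ s ∈ Y, min m (3 * w s) := by rw [add_comm, sum_inter_add_sum_sdiff]

theorem IsSkeletonProfile.demand_le_sum_min (hskel : IsSkeletonProfile jobs w)
    (htight : IsTight jobs w Y₀) (hdom : DominatesNeighbors w Y₀)
    (hm : ∀ Z, demand jobs Z ≤ #Z * m) (hw : ∀ t, w t ≤ m) (Y : Finset ℕ) :
    demand jobs Y ≤ ∑ t ∈ Y, min m (3 * w t) := by
  have hsuper := demand_add_demand_le jobs Y Y₀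
  have hunion := demand_le_sum_add_deficiency (jobs := jobs) (w := w) (Y ∪ Y₀)
  have hinter := hskel.demand_le_sum_min_of_subset htight hdom hm (Y := Y ∩ Y₀) inter_subset_right
  have hsdiff : ∑ t ∈ Y \ Y₀, w t ≤ ∑ t ∈ Y \ Y₀, min m (3 * w t) :=
    sum_le_sum fun t _ => le_min (hw t) (by omega)
  have hsplit := sum_inter_add_sum_sdiff Y Y₀ fun t => min m (3 * w t)
  have hsum : ∑ t ∈ Y ∪ Y₀, w t = ∑ t ∈ Y \ Y₀, w t + ∑ t ∈ Y₀, w t := by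
    rw [← sum_union sdiff_disjoint, sdiff_union_self_eq_union]
  unfold IsTight at htight
  omega

end Tripling

section Cost

lemma sum_card_le_sum_card {α β γ : Type*} [DecidableEq γ] {I : Finset α} {K : Finset β}
    {C : α → Finset γ} {D : β → Finset γ} (h : ∀ t, #{i ∈ I | t ∈ C i} ≤ #{k ∈ K | t ∈ D k}) :
    ∑ i ∈ I, #(C i) ≤ ∑ k ∈ K, #(D k) := by
  let U := I.biUnion C
  have hC (i) (hi : i ∈ I) : {t ∈ U | t ∈ C i} = C i := by
    rw [filter_mem_eq_inter]
    exact inter_eq_right.2 (subset_biUnion_of_mem C hi)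
  calc ∑ i ∈ I, #(C i) = ∑ i ∈ I, #{t ∈ U | t ∈ C i} := sum_congr rfl fun i hi => by rw [hC i hi]
    _ = ∑ t ∈ U, #{i ∈ I | t ∈ C i} :=
      sum_card_bipartiteAbove_eq_sum_card_bipartiteBelow fun i t => t ∈ C i
    _ ≤ ∑ t ∈ U, #{k ∈ K | t ∈ D k} := sum_le_sum fun t _ => h t
    _ = ∑ k ∈ K, #{t ∈ U | t ∈ D k} :=
      (sum_card_bipartiteAbove_eq_sum_card_bipartiteBelow fun k t => t ∈ D k).symm
    _ ≤ ∑ k ∈ K, #(D k) := sum_le_sum fun k _ => by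
      rw [filter_mem_eq_inter]
      exact card_le_card inter_subset_right

/-- The first slots of the maximal runs of `A`. -/
noncomputable def runStarts (A : Finset ℕ) : Finset ℕ := {t ∈ A | ∀ s ∈ A, s + 1 ≠ t}

lemma runs_eq_card_runStarts (A : Finset ℕ) : runs A = #(runStarts A) := rfl

lemma mem_runStarts {A : Finset ℕ} {t : ℕ} :
    t ∈ runStarts A ↔ t ∈ A ∧ ∀ s ∈ A, s + 1 ≠ t := mem_filter

lemma runs_insert_le {A : Finset ℕ} {s t : ℕ} (ht : t ∈ A) (hst : s + 1 = t ∨ t + 1 = s) :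
    runs (insert s A) ≤ runs A := by
  by_cases hs : s ∈ A
  · rw [insert_eq_of_mem hs]
  simp only [runs_eq_card_runStarts]
  rcases hst with rfl | rfl
  · have hstart : s + 1 ∈ runStarts A :=
      mem_runStarts.2 ⟨ht, fun x hx hxs => hs (Nat.succ.inj hxs ▸ hx)⟩
    have hsub : runStarts (insert s A) ⊆ insert s ((runStarts A).erase (s + 1)) := by
      intro x hx
      simp only [mem_runStarts, mem_insert, mem_erase, forall_eq_or_imp] at hx ⊢
      exact hx.1.imp_right fun hxA => ⟨hx.2.1.symm, hxA, hx.2.2⟩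
    have hcard := (card_le_card hsub).trans (card_insert_le _ _)
    rwa [card_erase_add_one hstart] at hcard
  · refine card_le_card fun x hx => ?_
    simp only [mem_runStarts, mem_insert, forall_eq_or_imp] at hx ⊢
    exact ⟨hx.1.resolve_left fun hxt => hx.2.2 t ht hxt.symm, hx.2.2⟩

variable {q : ℝ}

lemma cost_insert_le (hq : 0 ≤ q) {A : Finset ℕ} {s t : ℕ} (ht : t ∈ A)
    (hst : s + 1 = t ∨ t + 1 = s) : cost q (insert s A) ≤ cost q A + 1 := by
  have hcard : (#(insert s A) : ℝ) ≤ #A + 1 := mod_cast card_insert_le s A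
  have hruns : q * runs (insert s A) ≤ q * runs A := by
    gcongr
    exact runs_insert_le ht hst
  unfold cost
  linarith

lemma cost_nonneg (hq : 0 ≤ q) (A : Finset ℕ) : 0 ≤ cost q A := by
  unfold cost
  positivity

lemma sum_cost_eq {α : Type*} (I : Finset α) (C : α → Finset ℕ) :
    ∑ i ∈ I, cost q (C i) = (∑ i ∈ I, #(C i) : ℕ) + q * (∑ i ∈ I, runs (C i) : ℕ) := by
  simp only [cost, sum_add_distrib, mul_sum, Nat.cast_sum]

lemma sum_card_le_energy {m : ℕ} (hq : 0 ≤ q) (A : Fin m → Finset ℕ) :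
    ((∑ k, #(A k) : ℕ) : ℝ) ≤ energy q A := by
  rw [energy, sum_cost_eq]
  exact le_add_of_nonneg_right (by positivity)

-- The energy is a monotone function of the total size and the number of runs, and `ℕ × ℕ` is
-- well-quasi-ordered.
lemma exists_isLeast_energy {m : ℕ} (hq : 0 ≤ q) {P : (Fin m → Finset ℕ) → Prop}
    (hP : ∃ A, P A) : ∃ A, P A ∧ IsLeast {c | ∃ A, P A ∧ c = energy q A} (energy q A) := by
  let f (x : ℕ × ℕ) : ℝ := x.1 + q * x.2
  have hf : Monotone f := fun x y hxy => by
    have h₁ : x.1 ≤ y.1 := hxy.1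
    have h₂ : x.2 ≤ y.2 := hxy.2
    simp only [f]
    gcongr
  have hsub : {c | ∃ A, P A ∧ c = energy q A} ⊆ Set.range f := by
    rintro _ ⟨A, -, rfl⟩
    exact ⟨(_, _), (sum_cost_eq univ A).symm⟩
  have hwf : {c | ∃ A, P A ∧ c = energy q A}.IsWF :=
    Set.IsWF.mono (by
      rw [← Set.image_univ]
      exact ((Set.isPWO_of_wellQuasiOrderedLE _).image_of_monotone hf).isWF) hsub
  have hne : {c | ∃ A, P A ∧ c = energy q A}.Nonempty := hP.imp' _ fun A hA => ⟨A, hA, rfl⟩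
  obtain ⟨A, hA, hmin⟩ := hwf.min_mem hne
  refine ⟨A, hA, ⟨A, hA, rfl⟩, fun c hc => ?_⟩
  rw [← hmin]
  exact hwf.min_le hne hc

end Cost

section ActiveCount

variable {m : ℕ} {A A' : Fin m → Finset ℕ} {q : ℝ} {s t : ℕ}

lemma activeCount_le (A : Fin m → Finset ℕ) (t : ℕ) : activeCount A t ≤ m :=
  (card_le_univ _).trans_eq (Fintype.card_fin m)

lemma activeCount_mono (h : A ≤ A') : activeCount A ≤ activeCount A' := fun _ =>
  card_le_card (monotone_filter_right _ fun k _ ht => h k ht)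

lemma activeCount_lt_of_notMem_of_mem (h : A ≤ A') {k : Fin m} (hk : s ∉ A k) (hk' : s ∈ A' k) :
    activeCount A s < activeCount A' s :=
  card_lt_card <| (ssubset_iff_of_subset (monotone_filter_right _ fun k _ hs => h k hs)).2
    ⟨k, by simpa using hk', by simpa using hk⟩

lemma exists_mem_notMem_of_activeCount_lt (h : activeCount A s < activeCount A t) :
    ∃ k, t ∈ A k ∧ s ∉ A k := by
  obtain ⟨k, ht, hs⟩ := exists_mem_notMem_of_card_lt_card h
  exact ⟨k, by simpa using ht, by simpa using hs⟩

lemma energy_update (A : Fin m → Finset ℕ) (k : Fin m) (C : Finset ℕ) :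
    energy q (Function.update A k C) + cost q (A k) = energy q A + cost q C := by
  have hsum := sum_update_of_mem (mem_univ k) (fun k => cost q (A k)) (cost q C)
  have hsplit := add_sum_erase univ (fun k => cost q (A k)) (mem_univ k)
  rw [sdiff_singleton_eq_erase] at hsum
  simp only [energy, Function.apply_update fun _ => cost q]
  linarith

lemma exists_le_activeCount_lt (hq : 0 ≤ q) (hst : s + 1 = t ∨ t + 1 = s)
    (h : activeCount A s < activeCount A t) :
    ∃ A', A ≤ A' ∧ energy q A' ≤ energy q A + 1 ∧ activeCount A s < activeCount A' s := by
  obtain ⟨k, htk, hsk⟩ := exists_mem_notMem_of_activeCount_lt h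
  have hle : A ≤ Function.update A k (insert s (A k)) :=
    le_update_iff.2 ⟨subset_insert s _, fun _ _ => le_rfl⟩
  refine ⟨_, hle, ?_, activeCount_lt_of_notMem_of_mem hle hsk (by simp)⟩
  linarith [energy_update (q := q) A k (insert s (A k)), cost_insert_le hq htk hst]

variable [Fintype ι]

lemma exists_le_deficiency_lt {jobs : ι → Job} {Y : Finset ℕ} (hq : 0 ≤ q)
    (hY : IsLeast {Y | IsTight jobs (activeCount A) Y} Y)
    (hdom : ¬ DominatesNeighbors (activeCount A) Y) :
    ∃ A', A ≤ A' ∧ energy q A' ≤ energy q A + 1 ∧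
      deficiency jobs (activeCount A') < deficiency jobs (activeCount A) := by
  simp only [DominatesNeighbors, not_forall, not_le] at hdom
  obtain ⟨s, hs, t, hst, hlt⟩ := hdom
  obtain ⟨A', hle, henergy, hcount⟩ := exists_le_activeCount_lt hq hst hlt
  exact ⟨A', hle, henergy, deficiency_lt_of_lt hY hs (activeCount_mono hle) hcount⟩

lemma exists_le_isTight_dominatesNeighbors (jobs : ι → Job) (hq : 0 ≤ q)
    (B : Fin m → Finset ℕ) :
    ∃ A, B ≤ A ∧
      energy q A + deficiency jobs (activeCount A)
        ≤ energy q B + deficiency jobs (activeCount B) ∧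
      ∃ Y, IsTight jobs (activeCount A) Y ∧ DominatesNeighbors (activeCount A) Y := by
  induction hd : deficiency jobs (activeCount B) using Nat.strong_induction_on
    generalizing B with
  | h d ih =>
    obtain ⟨Y, hY⟩ := exists_isLeast_isTight jobs (activeCount B)
    by_cases hdom : DominatesNeighbors (activeCount B) Y
    · exact ⟨B, le_rfl, by rw [hd], Y, hY.1, hdom⟩
    · obtain ⟨B', hBB', henergy, hlt⟩ := exists_le_deficiency_lt hq hY hdom
      obtain ⟨A, hB'A, hbound, htight⟩ := ih _ (hd ▸ hlt) B' rfl
      have hcast : (deficiency jobs (activeCount B') : ℝ) + 1 ≤ d := by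
        exact_mod_cast hd ▸ hlt
      exact ⟨A, hBB'.trans hB'A, by linarith, htight⟩

end ActiveCount

section Thickening

variable {m : ℕ} {q : ℝ}

/-- The slots in which more than `j` machines are active. -/
noncomputable def level (A : Fin m → Finset ℕ) (j : ℕ) : Finset ℕ :=
  {t ∈ univ.biUnion A | j < activeCount A t}

lemma mem_level {A : Fin m → Finset ℕ} {j t : ℕ} : t ∈ level A j ↔ j < activeCount A t := by
  refine mem_filter.trans (and_iff_right_of_imp fun h => ?_)
  obtain ⟨k, hk⟩ := card_pos.1 (Nat.zero_lt_of_lt h)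
  exact mem_biUnion.2 ⟨k, mem_univ k, (mem_filter.1 hk).2⟩

lemma sum_card_level_le (A : Fin m → Finset ℕ) (N : ℕ) :
    ∑ j ∈ range N, #(level A j) ≤ ∑ k, #(A k) := by
  refine sum_card_le_sum_card fun t => ?_
  have hsub : {j ∈ range N | t ∈ level A j} ⊆ range (activeCount A t) := fun j hj =>
    mem_range.2 (mem_level.1 (mem_filter.1 hj).2)
  exact (card_le_card hsub).trans_eq (card_range _)

-- At `t + 1` exactly the levels `j` with `activeCount A t ≤ j < activeCount A (t + 1)` start a
-- run, and at least that many machines have to start one.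
lemma sum_runs_level_le (A : Fin m → Finset ℕ) (N : ℕ) :
    ∑ j ∈ range N, runs (level A j) ≤ ∑ k, runs (A k) := by
  refine sum_card_le_sum_card fun t => ?_
  simp only [← runStarts.eq_def]
  rcases t with _ | t
  · have hlevels : {j ∈ range N | 0 ∈ runStarts (level A j)} ⊆ range (activeCount A 0) :=
      fun j hj => mem_range.2 (mem_level.1 (mem_runStarts.1 (mem_filter.1 hj).2).1)
    have hmachines : activeCount A 0 ≤ #{k | 0 ∈ runStarts (A k)} :=
      card_le_card <| monotone_filter_right _ fun k _ hk =>
        mem_runStarts.2 ⟨hk, fun s _ => s.succ_ne_zero⟩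
    exact ((card_le_card hlevels).trans_eq (card_range _)).trans hmachines
  · have hlevels : {j ∈ range N | t + 1 ∈ runStarts (level A j)} ⊆
        Ico (activeCount A t) (activeCount A (t + 1)) := fun j hj => by
      obtain ⟨ht, hstart⟩ := mem_runStarts.1 (mem_filter.1 hj).2
      exact mem_Ico.2 ⟨not_lt.1 fun hlt => hstart t (mem_level.2 hlt) rfl, mem_level.1 ht⟩
    have hmachines : activeCount A (t + 1) - activeCount A t ≤
        #{k | t + 1 ∈ runStarts (A k)} := by
      refine (le_card_sdiff _ _).trans (card_le_card fun k hk => ?_)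
      simp only [mem_sdiff, mem_filter_univ] at hk
      exact (mem_filter_univ _).2 (mem_runStarts.2
        ⟨hk.1, fun s hs hst => hk.2 (Nat.succ.inj hst ▸ hs)⟩)
    exact ((card_le_card hlevels).trans_eq (Nat.card_Ico _ _)).trans hmachines

lemma sum_cost_level_le_energy (hq : 0 ≤ q) (A : Fin m → Finset ℕ) (N : ℕ) :
    ∑ j ∈ range N, cost q (level A j) ≤ energy q A := by
  rw [energy, sum_cost_eq, sum_cost_eq]
  gcongr
  · exact sum_card_level_le A N
  · exact sum_runs_level_le A N

lemma sum_range_mul_div {M : Type*} [AddCommMonoid M] (F : ℕ → M) (c N : ℕ) :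
    ∑ k ∈ range (c * N), F (k / c) = c • ∑ j ∈ range N, F j := by
  induction N with
  | zero => simp
  | succ N ih =>
    have hblock : ∑ x ∈ range c, F ((c * N + x) / c) = c • F N := by
      rw [sum_congr rfl fun x hx => ?_, sum_const, card_range]
      have hxc := mem_range.1 hx
      rw [Nat.mul_add_div (Nat.zero_lt_of_lt hxc), Nat.div_eq_of_lt hxc, add_zero]
    rw [Nat.mul_succ, sum_range_add, ih, hblock, sum_range_succ, smul_add]

/-- Use every level of the activity profile of `A` on `c` machines, as long as there are machines
left: this multiplies the profile by `c`, truncated at `m`. -/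
noncomputable def thicken (c : ℕ) (A : Fin m → Finset ℕ) (k : Fin m) : Finset ℕ :=
  level A (k / c)

lemma activeCount_thicken {c : ℕ} (hc : 0 < c) (A : Fin m → Finset ℕ) (t : ℕ) :
    activeCount (thicken c A) t = min m (c * activeCount A t) := by
  simp only [activeCount.eq_def (thicken c A), thicken, mem_level, Nat.div_lt_iff_lt_mul hc,
    Fin.card_filter_val_lt, mul_comm]

lemma energy_thicken_le {c : ℕ} (hc : 0 < c) (hq : 0 ≤ q) (A : Fin m → Finset ℕ) :
    energy q (thicken c A) ≤ c * energy q A := by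
  calc energy q (thicken c A) = ∑ k ∈ range m, cost q (level A (k / c)) :=
        Fin.sum_univ_eq_sum_range (fun k => cost q (level A (k / c))) m
    _ ≤ ∑ k ∈ range (c * m), cost q (level A (k / c)) :=
        sum_le_sum_of_subset_of_nonneg (range_subset_range.2 (Nat.le_mul_of_pos_left m hc))
          fun _ _ _ => cost_nonneg hq _
    _ = c * ∑ j ∈ range m, cost q (level A j) := by
        rw [sum_range_mul_div fun j => cost q (level A j), nsmul_eq_mul]
    _ ≤ c * energy q A := by
        gcongr
        exact sum_cost_level_le_energy hq A m

end Thickening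

section Skeletons

variable {n m : ℕ} {jobs : Fin n → Job} {l : ℕ → ℕ → ℕ} {q : ℝ} {A B : Fin m → Finset ℕ}
  {σ : Fin m → ℕ → Option (Fin n)}

lemma MFeasible.demand_le_card_mul (h : MFeasible jobs A σ) {Z : Finset ℕ} {c : ℕ}
    (hZ : ∀ t ∈ Z, activeCount A t ≤ c) : demand jobs Z ≤ #Z * c :=
  (h.isSlotAssignment.demand_le Z).trans (sum_le_card_nsmul Z _ c hZ)

lemma MFeasible.sum_p_le_energy (hq : 0 ≤ q) (h : MFeasible jobs A σ) :
    ((∑ i, (jobs i).p : ℕ) : ℝ) ≤ energy q A := by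
  have hwork : ∑ i, (jobs i).p ≤ ∑ k, #(A k) :=
    calc ∑ i, (jobs i).p = ∑ i, #(jobSlots A σ i) :=
          sum_congr rfl fun i _ => (h.isSlotAssignment.card_eq i).symm
      _ ≤ ∑ k, #(A k) := sum_card_le_sum_card h.isSlotAssignment.load_le
  exact (Nat.cast_le.2 hwork).trans (sum_card_le_energy hq A)

lemma MFeasible.mSkeleton (h : MFeasible jobs A σ)
    (hl : ∀ a b, a < b → l a b ∈ upperBounds {ℓ | BlackoutFeasible n m jobs a b ℓ}) :
    MSkeleton m jobs l A := by
  intro a b hab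
  obtain ⟨t, ht, hmax⟩ := exists_max_image (Ico a b) (activeCount A) (nonempty_Ico.2 hab)
  have hblackout : BlackoutFeasible n m jobs a b (m - activeCount A t) := by
    refine ⟨Nat.sub_le _ _, A, σ, h, fun s has hsb => ?_⟩
    rw [Nat.sub_sub_self (activeCount_le A t)]
    exact hmax s (mem_Ico.2 ⟨has, hsb⟩)
  exact ⟨t, (mem_Ico.1 ht).1, (mem_Ico.1 ht).2, tsub_le_iff_tsub_le.1 (hl a b hab hblackout)⟩

lemma MSkeleton.isSkeletonProfile (hB : MSkeleton m jobs l B)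
    (hl : ∀ a b, a < b → BlackoutFeasible n m jobs a b (l a b)) :
    IsSkeletonProfile jobs (activeCount B) := by
  intro a b hab
  obtain ⟨t, hat, htb, ht⟩ := hB a b hab
  obtain ⟨-, A, σ, h, hA⟩ := hl a b hab
  refine ⟨t, mem_Ico.2 ⟨hat, htb⟩, fun Z hZ => h.demand_le_card_mul fun s hs => ?_⟩
  obtain ⟨has, hsb⟩ := mem_Ico.1 (hZ hs)
  exact (hA s has hsb).trans ht

theorem MSkeleton.exists_mFeasible_energy_le (hq : 0 ≤ q) (hB : MSkeleton m jobs l B)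
    (hl : ∀ a b, a < b → BlackoutFeasible n m jobs a b (l a b)) :
    ∃ (A : Fin m → Finset ℕ) (σ : _), MFeasible jobs A σ ∧
      energy q A ≤ 3 * (energy q B + (∑ i, (jobs i).p : ℕ)) := by
  obtain ⟨A, hBA, henergy, Y, htight, hdom⟩ := exists_le_isTight_dominatesNeighbors jobs hq B
  have hskel := (hB.isSkeletonProfile hl).mono (activeCount_mono hBA)
  have hm (Z : Finset ℕ) : demand jobs Z ≤ #Z * m := by
    obtain ⟨-, A', σ', h, -⟩ := hl 0 1 one_pos
    exact h.demand_le_card_mul fun t _ => activeCount_le A' t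
  obtain ⟨σ, hσ⟩ : ∃ σ, MFeasible jobs (thicken 3 A) σ := by
    refine exists_mFeasible_iff.2 fun Z => ?_
    simp only [activeCount_thicken three_pos]
    exact hskel.demand_le_sum_min htight hdom hm (activeCount_le A) Z
  have hdef : (deficiency jobs (activeCount B) : ℝ) ≤ (∑ i, (jobs i).p : ℕ) :=
    Nat.cast_le.2 deficiency_le_sum_p
  refine ⟨_, σ, hσ, (energy_thicken_le three_pos hq A).trans ?_⟩
  rw [Nat.cast_ofNat]
  gcongr
  linarith [(deficiency jobs (activeCount A)).cast_nonneg (α := ℝ)]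

end Skeletons

end

/-- if the instance is feasible on `m` machines and `q > 0`, there is a
feasible `m`-machine solution of energy at most `3(S* + P)` where `S*` is the minimum
skeleton cost; since `S* ≤ OPT` and `P ≤ OPT`, its energy is also at most `6·OPT`. -/
theorem stmt11 {n : ℕ} (m : ℕ) (jobs : Fin n → Job) (hval : ∀ i, (jobs i).Valid)
    (q : ℝ) (hq : 0 < q)
    (l : ℕ → ℕ → ℕ)
    (hl : ∀ a b : ℕ, a < b →
      IsGreatest {ℓ : ℕ | BlackoutFeasible n m jobs a b ℓ} (l a b))
    (hfeas : ∃ (A : Fin m → Finset ℕ) (σ : Fin m → ℕ → Option (Fin n)),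
      MFeasible jobs A σ) :
    ∃ (A : Fin m → Finset ℕ) (σ : Fin m → ℕ → Option (Fin n)), MFeasible jobs A σ ∧
      energy q A ≤ 3 *
        (sInf {c : ℝ | ∃ B : Fin m → Finset ℕ, MSkeleton m jobs l B ∧ c = energy q B}
          + ((∑ i : Fin n, (jobs i).p : ℕ) : ℝ)) ∧
      energy q A ≤ 6 *
        sInf {c : ℝ | ∃ (A' : Fin m → Finset ℕ) (σ' : Fin m → ℕ → Option (Fin n)),
          MFeasible jobs A' σ' ∧ c = energy q A'} := by
  have hl' (a b : ℕ) (hab : a < b) : BlackoutFeasible n m jobs a b (l a b) := (hl a b hab).1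
  have hskeleton {A' σ'} (h : MFeasible jobs A' σ') : MSkeleton m jobs l A' :=
    h.mSkeleton fun a b hab => (hl a b hab).2
  obtain ⟨B, hB, hmin⟩ := exists_isLeast_energy hq.le (hfeas.imp fun _ ⟨_, h⟩ => hskeleton h)
  obtain ⟨A, σ, hσ, henergy⟩ := hB.exists_mFeasible_energy_le hq.le hl'
  refine ⟨A, σ, hσ, by rwa [hmin.csInf_eq], henergy.trans ?_⟩
  have hopt : (energy q B + (∑ i, (jobs i).p : ℕ)) / 2 ≤
      sInf {c | ∃ (A' : Fin m → Finset ℕ) (σ' : _), MFeasible jobs A' σ' ∧ c = energy q A'} := by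
    refine le_csInf ⟨_, A, σ, hσ, rfl⟩ ?_
    rintro _ ⟨A', σ', h, rfl⟩
    linarith [hmin.2 ⟨A', hskeleton h, rfl⟩, h.sum_p_le_energy hq.le]
  linarith
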